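/- arXiv:1708.03221 — 5 statements merged into one kernel-verified Lean document; each statement's English description precedes it below -/
import Mathlib

section
/- Let Ω and X be compact metric spaces and let Φ be a skew-product transformation on Ω×X with continuous base φ: Ω → Ω satisfying condition (H). Let a ∈ ℝ and let f: Ω×X → ℝ be a bounded Borel measurable function such that μ(D_f) = 0 and ∫_{Ω×X} f dμ = a for every Φ-invariant Borel probability measure μ on Ω×X. Then (1/n) Σ_{i=0}^{n-1} f(Φ^i(ω,x)) converges to a as n → ∞, uniformly in (ω,x) ∈ Ω×X. -/
open MeasureTheory Filter Topology

/-- Mapping theorem: weak convergence is preserved by a.e. continuous maps. -/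
lemma spt_map_tendsto {Y Z : Type*} [MetricSpace Y] [MeasurableSpace Y] [BorelSpace Y]
    [MetricSpace Z] [MeasurableSpace Z] [BorelSpace Z]
    (g : Y → Z) (hg : Measurable g) (μs : ℕ → ProbabilityMeasure Y) (μ : ProbabilityMeasure Y)
    (hD : (μ : Measure Y) {p | ¬ ContinuousAt g p} = 0) (h : Tendsto μs atTop (𝓝 μ)) :
    Tendsto (fun k => (μs k).map hg.aemeasurable) atTop (𝓝 (μ.map hg.aemeasurable)) := by
  apply tendsto_of_forall_isClosed_limsup_le'
  intro F hF
  have e : ∀ ν : ProbabilityMeasure Y,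
      ((ν.map hg.aemeasurable : ProbabilityMeasure Z) : Measure Z) F = (ν : Measure Y) (g ⁻¹' F) := by
    intro ν
    rw [ProbabilityMeasure.toMeasure_map, Measure.map_apply hg hF.measurableSet]
  simp only [e]
  calc limsup (fun i => (μs i : Measure Y) (g ⁻¹' F)) atTop
      ≤ limsup (fun i => (μs i : Measure Y) (closure (g ⁻¹' F))) atTop :=
        limsup_le_limsup (Eventually.of_forall fun i => measure_mono subset_closure)
    _ ≤ (μ : Measure Y) (closure (g ⁻¹' F)) :=
        ProbabilityMeasure.limsup_measure_closed_le_of_tendsto h isClosed_closure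
    _ ≤ (μ : Measure Y) (g ⁻¹' F ∪ {p | ¬ ContinuousAt g p}) := by
        apply measure_mono
        intro x hx
        by_cases hc : ContinuousAt g x
        · left
          have h1 : g x ∈ closure (g '' (g ⁻¹' F)) := by
            exact mem_closure_image hc hx
          exact hF.closure_subset_iff.2 (Set.image_preimage_subset g F) h1
        · right; exact hc
    _ ≤ (μ : Measure Y) (g ⁻¹' F) + (μ : Measure Y) {p | ¬ ContinuousAt g p} :=
        measure_union_le _ _
    _ = (μ : Measure Y) (g ⁻¹' F) := by rw [hD, add_zero]

lemma spt_integral_tendsto {Y : Type*} [MetricSpace Y] [MeasurableSpace Y] [BorelSpace Y]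
    (g : Y → ℝ) (hg : Measurable g) (C : ℝ) (hC : ∀ p, |g p| ≤ C)
    (μs : ℕ → ProbabilityMeasure Y) (μ : ProbabilityMeasure Y)
    (hD : (μ : Measure Y) {p | ¬ ContinuousAt g p} = 0) (h : Tendsto μs atTop (𝓝 μ)) :
    Tendsto (fun k => ∫ p, g p ∂(μs k : Measure Y)) atTop (𝓝 (∫ p, g p ∂(μ : Measure Y))) := by
  have h1 := spt_map_tendsto g hg μs μ hD h
  rw [ProbabilityMeasure.tendsto_iff_forall_integral_tendsto] at h1
  have hcont : Continuous (fun x : ℝ => max (-C) (min x C)) := by fun_prop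
  let b : BoundedContinuousFunction ℝ ℝ := BoundedContinuousFunction.ofNormedAddCommGroup
    (fun x : ℝ => max (-C) (min x C)) hcont |C| (by
      intro x
      rw [Real.norm_eq_abs, abs_le]
      constructor
      · exact (neg_le_neg (le_abs_self C)).trans (le_max_left _ _)
      · exact max_le (neg_le_abs C) ((min_le_right _ _).trans (le_abs_self C)))
  have h2 := h1 b
  have e : ∀ ν : ProbabilityMeasure Y,
      ∫ x, b x ∂((ν.map hg.aemeasurable : ProbabilityMeasure ℝ) : Measure ℝ)
        = ∫ p, g p ∂(ν : Measure Y) := by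
    intro ν
    rw [ProbabilityMeasure.toMeasure_map,
      integral_map hg.aemeasurable b.continuous.aestronglyMeasurable]
    congr 1
    ext p
    have := abs_le.1 (hC p)
    change max (-C) (min (g p) C) = g p
    rw [min_eq_left this.2, max_eq_right this.1]
  simpa only [e] using h2

/-- The empirical measure. -/
noncomputable def sptEmp {Y : Type*} [MeasurableSpace Y] (T : Y → Y) (n : ℕ) (p : Y) : Measure Y :=
  (n : ENNReal)⁻¹ • ∑ i ∈ Finset.range n, Measure.dirac (T^[i] p)

lemma sptEmp_prob {Y : Type*} [MeasurableSpace Y] (T : Y → Y) (n : ℕ) (hn : n ≠ 0) (p : Y) :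
    IsProbabilityMeasure (sptEmp T n p) := by
  constructor
  simp [sptEmp, ENNReal.inv_mul_cancel, hn]

lemma sptEmp_integral {Y : Type*} [MeasurableSpace Y] (T : Y → Y) (n : ℕ) (p : Y)
    (g : Y → ℝ) (hg : Measurable g) :
    ∫ x, g x ∂(sptEmp T n p) = (n : ℝ)⁻¹ * ∑ i ∈ Finset.range n, g (T^[i] p) := by
  have hi : ∀ x : Y, Integrable g (Measure.dirac x) := by
    intro x
    exact integrable_dirac' hg.stronglyMeasurable (by simp)
  rw [sptEmp, integral_smul_measure, integral_finsetSum_measure (fun i _ => hi _)]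
  simp [integral_dirac' _ _ hg.stronglyMeasurable]

lemma sptEmp_diff {Y : Type*} [MeasurableSpace Y] (T : Y → Y) (hT : Measurable T) (n : ℕ) (p : Y)
    (g : Y → ℝ) (hg : Measurable g) (C : ℝ) (hC : ∀ p, |g p| ≤ C) :
    |∫ x, g (T x) ∂(sptEmp T n p) - ∫ x, g x ∂(sptEmp T n p)| ≤ (n : ℝ)⁻¹ * (2 * C) := by
  rw [sptEmp_integral T n p (fun x => g (T x)) (hg.comp hT), sptEmp_integral T n p g hg, ← mul_sub,
    ← Finset.sum_sub_distrib]
  have e : ∑ i ∈ Finset.range n, (g (T (T^[i] p)) - g (T^[i] p)) = g (T^[n] p) - g p := by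
    have := Finset.sum_range_sub (fun i => g (T^[i] p)) n
    simpa [Function.iterate_succ_apply'] using this
  rw [e, abs_mul, abs_of_nonneg (by positivity)]
  gcongr
  have h1 := abs_le.1 (hC (T^[n] p))
  have h2 := abs_le.1 (hC p)
  rw [abs_le]
  constructor <;> linarith

/-- Invariance criterion. -/
lemma spt_inv {Y Z : Type*} [MetricSpace Y] [MeasurableSpace Y] [BorelSpace Y]
    [MetricSpace Z] [MeasurableSpace Z] [BorelSpace Z] (Φ : Y → Y)
    (μs : ℕ → ProbabilityMeasure Y) (μ : ProbabilityMeasure Y) (hlim : Tendsto μs atTop (𝓝 μ))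
    (hdiff : ∀ g : Y → ℝ, Measurable g → (∃ C, ∀ q, |g q| ≤ C) →
      Tendsto (fun k => ∫ x, g (Φ x) ∂(μs k : Measure Y)
        - ∫ x, g x ∂(μs k : Measure Y)) atTop (𝓝 0))
    (r s : Y → Z) (hr : Measurable r) (hs : Measurable s) (hrs : s = r ∘ Φ)
    (hDr : (μ : Measure Y) {q | ¬ ContinuousAt r q} = 0)
    (hDs : (μ : Measure Y) {q | ¬ ContinuousAt s q} = 0) :
    (μ : Measure Y).map s = (μ : Measure Y).map r := by
  have t1 := spt_map_tendsto r hr _ μ hDr hlim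
  have t2 := spt_map_tendsto s hs _ μ hDs hlim
  have t3 : Tendsto (fun k => (μs k).map hs.aemeasurable) atTop
      (𝓝 (μ.map hr.aemeasurable)) := by
    rw [ProbabilityMeasure.tendsto_iff_forall_integral_tendsto] at t1 ⊢
    intro g
    have t4 := (t1 g).add (hdiff (g ∘ r) (g.continuous.measurable.comp hr)
      ⟨‖g‖, fun q => g.norm_coe_le_norm _⟩)
    rw [add_zero] at t4
    refine t4.congr fun k => ?_
    simp only [ProbabilityMeasure.toMeasure_map]
    rw [integral_map hr.aemeasurable g.continuous.aestronglyMeasurable,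
      integral_map hs.aemeasurable g.continuous.aestronglyMeasurable, hrs]
    simp
  have := tendsto_nhds_unique t2 t3
  have := congrArg (fun ν : ProbabilityMeasure Z => (ν : Measure Z)) this
  simpa only [ProbabilityMeasure.toMeasure_map] using this

/-- Uniform ergodic theorem for skew-product transformations with
discontinuous observation functions. -/
theorem uniform_ergodic_theorem_SPT
    {Ω X : Type*}
    [MetricSpace Ω] [CompactSpace Ω] [MeasurableSpace Ω] [BorelSpace Ω]
    [MetricSpace X] [CompactSpace X] [MeasurableSpace X] [BorelSpace X]
    (φ : Ω → Ω) (hφ : Continuous φ)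
    (Φ : Ω × X → Ω × X) (hΦmeas : Measurable Φ)
    (hbase : ∀ p : Ω × X, (Φ p).1 = φ p.1)
    (hH : ∀ ν : Measure Ω, IsProbabilityMeasure ν →
      (∀ s : Set Ω, MeasurableSet s → ν (φ ⁻¹' s) = ν s) →
      ν (Prod.fst '' {p : Ω × X | ¬ ContinuousAt Φ p}) = 0)
    (a : ℝ) (f : Ω × X → ℝ) (hfmeas : Measurable f)
    (hfbdd : ∃ C : ℝ, ∀ p, |f p| ≤ C)
    (hf : ∀ μ : Measure (Ω × X), IsProbabilityMeasure μ →
      (∀ s : Set (Ω × X), MeasurableSet s → μ (Φ ⁻¹' s) = μ s) →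
      μ {p : Ω × X | ¬ ContinuousAt f p} = 0 ∧ ∫ p, f p ∂μ = a) :
    TendstoUniformly
      (fun (n : ℕ) (p : Ω × X) => (n : ℝ)⁻¹ * ∑ i ∈ Finset.range n, f (Φ^[i] p))
      (fun _ => a) atTop := by
  have : SecondCountableTopology Ω := inferInstance
  have : SecondCountableTopology X := inferInstance
  obtain ⟨C, hC⟩ := hfbdd
  by_contra hcon
  rw [Metric.tendstoUniformly_iff] at hcon
  push Not at hcon
  obtain ⟨ε, hε, hfr⟩ := hcon
  obtain ⟨u, hu, hup⟩ := extraction_of_frequently_atTop (hfr.and_eventually (eventually_ge_atTop 1))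
  choose hp hu1 using hup
  choose p hp using hp
  let μs : ℕ → ProbabilityMeasure (Ω × X) := fun k =>
    ⟨sptEmp Φ (u k) (p k), sptEmp_prob _ _ (by have := hu1 k; omega) _⟩
  obtain ⟨μ, v, hv, hlim⟩ := CompactSpace.tendsto_subseq μs
  have huv : Tendsto (fun k => u (v k)) atTop atTop := (hu.comp hv).tendsto_atTop
  -- difference of integrals tends to zero
  have hdiff : ∀ g : Ω × X → ℝ, Measurable g → (∃ C, ∀ q, |g q| ≤ C) →
      Tendsto (fun k => ∫ x, g (Φ x) ∂((μs ∘ v) k : Measure (Ω × X))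
        - ∫ x, g x ∂((μs ∘ v) k : Measure (Ω × X))) atTop (𝓝 0) := by
    rintro g hg ⟨B, hB⟩
    have h0 : Tendsto (fun k => ((u (v k) : ℕ) : ℝ)⁻¹ * (2 * B)) atTop (𝓝 0) := by
      simpa using ((tendsto_natCast_atTop_atTop (R := ℝ)).comp huv).inv_tendsto_atTop.mul_const
        (2 * B)
    exact squeeze_zero_norm (fun k => sptEmp_diff Φ hΦmeas _ _ g hg B hB) h0
  -- base
  have hb := spt_inv Φ _ μ hlim hdiff Prod.fst (φ ∘ Prod.fst) measurable_fst (hφ.measurable.comp measurable_fst)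
    (by ext q; simp [hbase])
    (by simp [continuous_fst.continuousAt])
    (by simp [(hφ.comp continuous_fst).continuousAt])
  have hDΦ : (μ : Measure (Ω × X)) {q | ¬ ContinuousAt Φ q} = 0 := by
    have h1 := hH ((μ : Measure (Ω × X)).map Prod.fst)
      (Measure.isProbabilityMeasure_map measurable_fst.aemeasurable) (by
        intro s hs
        conv_rhs => rw [← hb]
        rw [Measure.map_apply measurable_fst (hφ.measurable hs),
          Measure.map_apply (hφ.measurable.comp measurable_fst) hs]
        rfl)
    have h2 := measure_mono_null (Set.Subset.refl _)
      (Measure.QuasiMeasurePreserving.preimage_null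
        (⟨measurable_fst, Measure.AbsolutelyContinuous.rfl⟩ :
          Measure.QuasiMeasurePreserving Prod.fst (μ : Measure (Ω × X)) _) h1)
    exact measure_mono_null (Set.subset_preimage_image _ _) h2
  have hm := spt_inv Φ _ μ hlim hdiff id Φ measurable_id hΦmeas rfl
    (by simp [continuousAt_id]) hDΦ
  obtain ⟨hDf, hintegral⟩ := hf μ inferInstance (by
    intro s hs
    rw [Measure.map_id] at hm
    conv_rhs => rw [← hm]
    rw [Measure.map_apply hΦmeas hs])
  have hfin := spt_integral_tendsto f hfmeas C hC _ μ hDf hlim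
  rw [hintegral] at hfin
  obtain ⟨k, hk⟩ := ((Metric.tendsto_nhds.1 hfin) ε hε).exists
  have h3 := hp (v k)
  have h4 : ∫ x, f x ∂((μs ∘ v) k : Measure (Ω × X)) = _ :=
    sptEmp_integral Φ (u (v k)) (p (v k)) f hfmeas
  rw [h4, dist_comm] at hk
  exact absurd hk (not_lt.2 h3)
end

section
/- Let Ω and X be compact metric spaces and let Φ be a skew-product transformation on Ω×X with continuous base φ: Ω → Ω satisfying condition (H). Let a ∈ ℝ and let f: Ω×X → ℝ be a bounded Borel measurable function such that μ(D_f) = 0 and ∫_{Ω×X} f dμ ≤ a for every Φ-invariant Borel probability measure μ on Ω×X. Then for every ε > 0 there exists N ∈ ℕ such that for all n ≥ N and all (ω,x) ∈ Ω×X, (1/n) Σ_{i=0}^{n-1} f(Φ^i(ω,x)) ≤ a + ε. -/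
open MeasureTheory Filter Topology

/-- Mapping theorem for almost everywhere continuous maps. -/
theorem spt_tendsto_map {Y Z : Type*}
    [MetricSpace Y] [MeasurableSpace Y] [BorelSpace Y]
    [MetricSpace Z] [MeasurableSpace Z] [BorelSpace Z]
    (T : Y → Z) (hT : Measurable T)
    (μs : ℕ → ProbabilityMeasure Y) (μ : ProbabilityMeasure Y)
    (hlim : Tendsto μs atTop (𝓝 μ))
    (hD : (μ : Measure Y) {p | ¬ ContinuousAt T p} = 0) :
    Tendsto (fun k => (μs k).map hT.aemeasurable) atTop (𝓝 (μ.map hT.aemeasurable)) := by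
  apply tendsto_of_forall_isClosed_limsup_le'
  intro F hF
  have e : ∀ ν : ProbabilityMeasure Y,
      ((ν.map hT.aemeasurable : ProbabilityMeasure Z) : Measure Z) F = (ν : Measure Y) (T ⁻¹' F) := by
    intro ν
    rw [ProbabilityMeasure.toMeasure_map, Measure.map_apply hT hF.measurableSet]
  simp only [e]
  calc limsup (fun k => (μs k : Measure Y) (T ⁻¹' F)) atTop
      ≤ limsup (fun k => (μs k : Measure Y) (closure (T ⁻¹' F))) atTop := by
        apply limsup_le_limsup
        · exact Eventually.of_forall fun k => measure_mono subset_closure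
        · isBoundedDefault
        · isBoundedDefault
    _ ≤ (μ : Measure Y) (closure (T ⁻¹' F)) :=
        ProbabilityMeasure.limsup_measure_closed_le_of_tendsto hlim isClosed_closure
    _ ≤ (μ : Measure Y) (T ⁻¹' F ∪ {p | ¬ ContinuousAt T p}) := by
        apply measure_mono
        intro y hy
        by_cases hc : ContinuousAt T y
        · left
          have h1 : T y ∈ closure (T '' (T ⁻¹' F)) := hc.continuousWithinAt.mem_closure_image hy
          exact hF.closure_subset_iff.2 (Set.image_preimage_subset T F) h1
        · right; exact hc
    _ ≤ (μ : Measure Y) (T ⁻¹' F) + (μ : Measure Y) {p | ¬ ContinuousAt T p} := measure_union_le _ _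
    _ = (μ : Measure Y) (T ⁻¹' F) := by rw [hD, add_zero]

/-- Convergence of integrals of bounded almost everywhere continuous functions. -/
theorem spt_tendsto_integral {Y : Type*}
    [MetricSpace Y] [MeasurableSpace Y] [BorelSpace Y]
    (g : Y → ℝ) (hg : Measurable g) (C : ℝ) (hC : ∀ p, |g p| ≤ C)
    (μs : ℕ → ProbabilityMeasure Y) (μ : ProbabilityMeasure Y)
    (hlim : Tendsto μs atTop (𝓝 μ))
    (hD : (μ : Measure Y) {p | ¬ ContinuousAt g p} = 0) :
    Tendsto (fun k => ∫ p, g p ∂(μs k : Measure Y)) atTop (𝓝 (∫ p, g p ∂(μ : Measure Y))) := by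
  have h := spt_tendsto_map g hg μs μ hlim hD
  rw [ProbabilityMeasure.tendsto_iff_forall_integral_tendsto] at h
  let c : BoundedContinuousFunction ℝ ℝ := BoundedContinuousFunction.ofNormedAddCommGroup
    (fun t => max (-|C|) (min |C| t)) (by fun_prop) |C| (by
      intro t
      rw [Real.norm_eq_abs, abs_le]
      exact ⟨le_max_left _ _, max_le (by linarith [abs_nonneg C]) (min_le_left _ _)⟩)
  have hcg : ∀ p, c (g p) = g p := by
    intro p
    have h1 := abs_le.1 ((hC p).trans (le_abs_self C))
    change max (-|C|) (min |C| (g p)) = g p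
    rw [min_eq_right h1.2, max_eq_right h1.1]
  have e : ∀ ν : ProbabilityMeasure Y,
      ∫ t, c t ∂((ν.map hg.aemeasurable : ProbabilityMeasure ℝ) : Measure ℝ)
        = ∫ p, g p ∂(ν : Measure Y) := by
    intro ν
    rw [ProbabilityMeasure.toMeasure_map, integral_map hg.aemeasurable
      c.continuous.aestronglyMeasurable]
    simp only [hcg]
  have h2 := h c
  simpa only [e] using h2

/-- Limits of asymptotically invariant sequences are invariant. -/
theorem spt_invariant {Y : Type*}
    [MetricSpace Y] [MeasurableSpace Y] [BorelSpace Y]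
    (T : Y → Y) (hT : Measurable T)
    (μs : ℕ → ProbabilityMeasure Y) (μ : ProbabilityMeasure Y)
    (hlim : Tendsto μs atTop (𝓝 μ))
    (hD : (μ : Measure Y) {p | ¬ ContinuousAt T p} = 0)
    (has : ∀ h : BoundedContinuousFunction Y ℝ,
      Tendsto (fun k => ∫ p, h (T p) ∂(μs k : Measure Y) - ∫ p, h p ∂(μs k : Measure Y))
        atTop (𝓝 0)) :
    ∀ s : Set Y, MeasurableSet s → (μ : Measure Y) (T ⁻¹' s) = (μ : Measure Y) s := by
  have h1 := spt_tendsto_map T hT μs μ hlim hD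
  rw [ProbabilityMeasure.tendsto_iff_forall_integral_tendsto] at h1 hlim
  have key : (μ : Measure Y).map T = μ := by
    have : IsProbabilityMeasure ((μ : Measure Y).map T) :=
      Measure.isProbabilityMeasure_map hT.aemeasurable
    apply ext_of_forall_integral_eq_of_IsFiniteMeasure
    intro h
    have h2 := (h1 h).sub (hlim h)
    have e : ∀ k, ∫ p, h p ∂(((μs k).map hT.aemeasurable : ProbabilityMeasure Y) : Measure Y)
        = ∫ p, h (T p) ∂(μs k : Measure Y) := by
      intro k
      rw [ProbabilityMeasure.toMeasure_map, integral_map hT.aemeasurable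
        h.continuous.aestronglyMeasurable]
    simp only [e] at h2
    have h3 := tendsto_nhds_unique h2 (has h)
    rw [ProbabilityMeasure.toMeasure_map] at h3
    linarith
  intro s hs
  conv_rhs => rw [← key]
  rw [Measure.map_apply hT hs]

/-- Empirical measures. -/
theorem spt_empirical {Y : Type*} [MetricSpace Y] [MeasurableSpace Y] [BorelSpace Y]
    (T : Y → Y) (n : ℕ) (hn : 0 < n) (p : Y) :
    ∃ μ : ProbabilityMeasure Y, ∀ h : Y → ℝ,
      ∫ q, h q ∂(μ : Measure Y) = (n : ℝ)⁻¹ * ∑ i ∈ Finset.range n, h (T^[i] p) := by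
  have hp : IsProbabilityMeasure
      ((n : ENNReal)⁻¹ • ∑ i ∈ Finset.range n, Measure.dirac (T^[i] p)) := by
    constructor
    simp only [Measure.smul_apply, Measure.finsetSum_apply, measure_univ, Finset.sum_const,
      Finset.card_range, smul_eq_mul, nsmul_eq_mul, mul_one]
    exact ENNReal.inv_mul_cancel (by exact_mod_cast hn.ne') (ENNReal.natCast_ne_top n)
  refine ⟨⟨_, hp⟩, fun h => ?_⟩
  change ∫ q, h q ∂((n : ENNReal)⁻¹ • ∑ i ∈ Finset.range n, Measure.dirac (T^[i] p)) = _
  rw [integral_smul_measure, integral_finsetSum_measure]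
  · simp
  · intro i _
    exact integrable_dirac (by simp)

/-- Semi-uniform ergodic theorem (upper bound) for skew-product transformations with
discontinuous observation functions. -/
theorem semi_uniform_ergodic_theorem_SPT_le
    {Ω X : Type*}
    [MetricSpace Ω] [CompactSpace Ω] [MeasurableSpace Ω] [BorelSpace Ω]
    [MetricSpace X] [CompactSpace X] [MeasurableSpace X] [BorelSpace X]
    (φ : Ω → Ω) (hφ : Continuous φ)
    (Φ : Ω × X → Ω × X) (hΦmeas : Measurable Φ)
    (hbase : ∀ p : Ω × X, (Φ p).1 = φ p.1)
    (hH : ∀ ν : Measure Ω, IsProbabilityMeasure ν →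
      (∀ s : Set Ω, MeasurableSet s → ν (φ ⁻¹' s) = ν s) →
      ν (Prod.fst '' {p : Ω × X | ¬ ContinuousAt Φ p}) = 0)
    (a : ℝ) (f : Ω × X → ℝ) (hfmeas : Measurable f)
    (hfbdd : ∃ C : ℝ, ∀ p, |f p| ≤ C)
    (hf : ∀ μ : Measure (Ω × X), IsProbabilityMeasure μ →
      (∀ s : Set (Ω × X), MeasurableSet s → μ (Φ ⁻¹' s) = μ s) →
      μ {p : Ω × X | ¬ ContinuousAt f p} = 0 ∧ ∫ p, f p ∂μ ≤ a) :
    ∀ ε > (0 : ℝ), ∃ N : ℕ, ∀ n ≥ N, ∀ p : Ω × X,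
      (n : ℝ)⁻¹ * ∑ i ∈ Finset.range n, f (Φ^[i] p) ≤ a + ε := by
  intro ε hε
  by_contra hcon
  push Not at hcon
  choose n hn p hp using fun k : ℕ => hcon (k + 1)
  choose m hm using fun k : ℕ => spt_empirical Φ (n k) (by have := hn k; omega) (p k)
  -- a convergent subsequence
  obtain ⟨μ, -, u, hu, hlim⟩ := IsCompact.tendsto_subseq
    (isCompact_univ (X := ProbabilityMeasure (Ω × X))) (x := m) (fun k => Set.mem_univ _)
  have hinv : Tendsto (fun k => ((n k : ℕ) : ℝ)⁻¹) atTop (𝓝 0) := by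
    apply tendsto_inv_atTop_zero.comp
    apply tendsto_natCast_atTop_atTop.comp
    exact tendsto_atTop_mono (fun k => (Nat.le_succ k).trans (hn k)) tendsto_id
  have has : ∀ (h : Ω × X → ℝ) (C : ℝ), (∀ q, |h q| ≤ C) →
      Tendsto (fun k => ∫ q, h (Φ q) ∂(m k : Measure (Ω × X)) - ∫ q, h q ∂(m k : Measure (Ω × X)))
        atTop (𝓝 0) := by
    intro h C hC
    have hz : Tendsto (fun k => ((n k : ℕ) : ℝ)⁻¹ * (2 * C)) atTop (𝓝 0) := by
      simpa using hinv.mul_const (2 * C)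
    refine squeeze_zero_norm (fun k => ?_) hz
    rw [hm k h, hm k (fun q => h (Φ q)), ← mul_sub, ← Finset.sum_sub_distrib]
    have := Finset.sum_range_sub (fun i => h (Φ^[i] (p k))) (n k)
    simp only [Function.iterate_succ_apply'] at this
    rw [this, norm_mul, Real.norm_eq_abs, Real.norm_eq_abs, abs_of_nonneg (by positivity)]
    gcongr
    have h1 := abs_le.1 (hC (Φ^[n k] (p k)))
    have h2 := abs_le.1 (hC (Φ^[0] (p k)))
    rw [abs_le]
    constructor <;> linarith [h1.1, h1.2, h2.1, h2.2]
  -- the projection of the limit is invariant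
  have hfst : Measurable (Prod.fst : Ω × X → Ω) := measurable_fst
  have hνlim := ProbabilityMeasure.tendsto_map_of_tendsto_of_continuous _ _ hlim
    (continuous_fst : Continuous (Prod.fst : Ω × X → Ω))
  have hνinv := spt_invariant φ hφ.measurable _ _ hνlim
    (by simp [hφ.continuousAt]) (by
      intro h
      have h1 := (has (fun q => h q.1) ‖h‖ (fun q => h.norm_coe_le_norm q.1)).comp hu.tendsto_atTop
      refine h1.congr fun k => ?_
      simp only [Function.comp, hbase]
      rw [ProbabilityMeasure.toMeasure_map, integral_map hfst.aemeasurable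
        h.continuous.aestronglyMeasurable, integral_map (f := fun w => h (φ w))
        hfst.aemeasurable (h.continuous.comp hφ).aestronglyMeasurable])
  have hνD := hH _ (ProbabilityMeasure.instIsProbabilityMeasureToMeasure _) hνinv
  rw [ProbabilityMeasure.toMeasure_map] at hνD
  have hμD : (μ : Measure (Ω × X)) {q | ¬ ContinuousAt Φ q} = 0 :=
    measure_mono_null (Set.subset_preimage_image Prod.fst _)
      (Measure.preimage_null_of_map_null hfst.aemeasurable hνD)
  have hμinv := spt_invariant Φ hΦmeas _ _ hlim hμD (fun h =>
    (has h ‖h‖ (fun q => h.norm_coe_le_norm q)).comp hu.tendsto_atTop)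
  obtain ⟨hfD, hfle⟩ := hf μ inferInstance hμinv
  obtain ⟨C, hC⟩ := hfbdd
  have hint := spt_tendsto_integral f hfmeas C hC _ _ hlim hfD
  have : a + ε ≤ ∫ q, f q ∂(μ : Measure (Ω × X)) := by
    refine ge_of_tendsto' hint fun k => ?_
    simp only [Function.comp, hm]
    exact (hp (u k)).le
  linarith
end

section
/- Let Ω and X be compact metric spaces and let Φ be a skew-product transformation on Ω×X with continuous base φ: Ω → Ω satisfying condition (H). Then the set M(Ω×X, Φ) of Φ-invariant Borel probability measures on Ω×X is a compact subset of the space of Borel probability measures on Ω×X endowed with the weak* topology. -/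
open MeasureTheory Filter Topology

/-- The set of invariant Borel probability measures of a skew-product
transformation satisfying condition (H) is compact in the weak* topology. -/
theorem invariant_measures_isCompact_SPT
    {Ω X : Type*}
    [MetricSpace Ω] [CompactSpace Ω] [MeasurableSpace Ω] [BorelSpace Ω]
    [MetricSpace X] [CompactSpace X] [MeasurableSpace X] [BorelSpace X]
    (φ : Ω → Ω) (hφ : Continuous φ)
    (Φ : Ω × X → Ω × X) (hΦmeas : Measurable Φ)
    (hbase : ∀ p : Ω × X, (Φ p).1 = φ p.1)
    (hH : ∀ ν : Measure Ω, IsProbabilityMeasure ν →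
      (∀ s : Set Ω, MeasurableSet s → ν (φ ⁻¹' s) = ν s) →
      ν (Prod.fst '' {p : Ω × X | ¬ ContinuousAt Φ p}) = 0) :
    IsCompact {μ : ProbabilityMeasure (Ω × X) |
      ∀ s : Set (Ω × X), MeasurableSet s →
        (μ : Measure (Ω × X)) (Φ ⁻¹' s) = (μ : Measure (Ω × X)) s} := by
  have key : ∀ μ : ProbabilityMeasure (Ω × X),
      (∀ s : Set (Ω × X), MeasurableSet s →
        (μ : Measure (Ω × X)) (Φ ⁻¹' s) = (μ : Measure (Ω × X)) s) ↔
      μ.map hΦmeas.aemeasurable = μ := by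
    intro μ
    constructor
    · intro h
      apply Subtype.ext
      ext s hs
      have := ProbabilityMeasure.map_apply' μ hΦmeas.aemeasurable hs
      exact this.trans (h s hs)
    · intro h s hs
      have := ProbabilityMeasure.map_apply' μ hΦmeas.aemeasurable hs
      rw [h] at this
      exact this.symm
  apply IsClosed.isCompact
  apply IsSeqClosed.isClosed
  intro μs μ hμs hlim
  have hfst : Continuous (Prod.fst : Ω × X → Ω) := continuous_fst
  have h1 := ProbabilityMeasure.tendsto_map_of_tendsto_of_continuous _ _ hlim hfst
  have h2 := ProbabilityMeasure.tendsto_map_of_tendsto_of_continuous _ _ h1 hφ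
  have h3 : ∀ i, ((μs i).map hfst.measurable.aemeasurable).map hφ.measurable.aemeasurable
      = (μs i).map hfst.measurable.aemeasurable := by
    intro i
    apply Subtype.ext
    ext s hs
    refine (ProbabilityMeasure.map_apply' _ hφ.measurable.aemeasurable hs).trans ?_
    refine (ProbabilityMeasure.map_apply' _ _ (hφ.measurable hs)).trans ?_
    refine Eq.trans ?_ (ProbabilityMeasure.map_apply' _ _ hs).symm
    rw [← hμs i _ (hfst.measurable hs)]
    congr 1
    ext p
    simp [hbase]
  simp only [h3] at h2
  have h4 := tendsto_nhds_unique h2 h1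
  have h5 := hH (μ.map hfst.measurable.aemeasurable : ProbabilityMeasure Ω) inferInstance (by
    intro s hs
    have := ProbabilityMeasure.map_apply' (μ.map hfst.measurable.aemeasurable)
      hφ.measurable.aemeasurable hs
    rw [h4] at this
    exact this.symm)
  have hD : (μ : Measure (Ω × X)) {p : Ω × X | ¬ ContinuousAt Φ p} = 0 := by
    have h6 : (μ : Measure (Ω × X)) (Prod.fst ⁻¹'
        (Prod.fst '' {p : Ω × X | ¬ ContinuousAt Φ p})) = 0 :=
      Measure.preimage_null_of_map_null hfst.measurable.aemeasurable h5
    exact measure_mono_null (Set.subset_preimage_image _ _) h6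
  refine (key μ).2 ?_
  have h7 : Tendsto (fun i => (μs i).map hΦmeas.aemeasurable) atTop
      (𝓝 (μ.map hΦmeas.aemeasurable)) := by
    apply tendsto_of_forall_isOpen_le_liminf'
    intro G hG
    simp only [ProbabilityMeasure.map_apply' _ hΦmeas.aemeasurable hG.measurableSet]
    have hsub : Φ ⁻¹' G ⊆ interior (Φ ⁻¹' G) ∪ {p : Ω × X | ¬ ContinuousAt Φ p} := by
      intro p hp
      by_cases hc : ContinuousAt Φ p
      · left
        exact mem_interior_iff_mem_nhds.2 (hc.preimage_mem_nhds (hG.mem_nhds hp))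
      · right
        exact hc
    calc (μ : Measure (Ω × X)) (Φ ⁻¹' G)
        ≤ (μ : Measure (Ω × X)) (interior (Φ ⁻¹' G)) := by
          refine (measure_mono hsub).trans ((measure_union_le _ _).trans ?_)
          rw [hD, add_zero]
      _ ≤ _ := ProbabilityMeasure.le_liminf_measure_open_of_tendsto hlim isOpen_interior
      _ ≤ _ := liminf_le_liminf (Eventually.of_forall fun i => measure_mono interior_subset)
  have h8 : ∀ i, (μs i).map hΦmeas.aemeasurable = μs i := fun i => (key _).1 (hμs i)
  simp only [h8] at h7
  exact tendsto_nhds_unique h7 hlim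
end

section
/- Let Ω and X be compact metric spaces and let Φ be a skew-product transformation on Ω×X with continuous base φ: Ω → Ω satisfying condition (H). Then a measure μ ∈ M(Ω×X, Φ) is an extreme point of the convex set M(Ω×X, Φ) if and only if μ is ergodic under Φ. -/
open MeasureTheory Filter Topology NNReal

/-- For a skew-product transformation satisfying condition (H), an invariant
Borel probability measure is an extreme point of the set of invariant Borel
probability measures if and only if it is ergodic. -/
theorem extreme_iff_ergodic_SPT
    {Ω X : Type*}
    [MetricSpace Ω] [CompactSpace Ω] [MeasurableSpace Ω] [BorelSpace Ω]
    [MetricSpace X] [CompactSpace X] [MeasurableSpace X] [BorelSpace X]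
    (φ : Ω → Ω) (hφ : Continuous φ)
    (Φ : Ω × X → Ω × X) (hΦmeas : Measurable Φ)
    (hbase : ∀ p : Ω × X, (Φ p).1 = φ p.1)
    (hH : ∀ ν : Measure Ω, IsProbabilityMeasure ν →
      (∀ s : Set Ω, MeasurableSet s → ν (φ ⁻¹' s) = ν s) →
      ν (Prod.fst '' {p : Ω × X | ¬ ContinuousAt Φ p}) = 0)
    (μ : Measure (Ω × X)) (hμprob : IsProbabilityMeasure μ)
    (hμinv : ∀ s : Set (Ω × X), MeasurableSet s → μ (Φ ⁻¹' s) = μ s) :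
    (∀ (μ₁ μ₂ : Measure (Ω × X)) (t : ℝ≥0),
        IsProbabilityMeasure μ₁ →
        (∀ s : Set (Ω × X), MeasurableSet s → μ₁ (Φ ⁻¹' s) = μ₁ s) →
        IsProbabilityMeasure μ₂ →
        (∀ s : Set (Ω × X), MeasurableSet s → μ₂ (Φ ⁻¹' s) = μ₂ s) →
        0 < t → t < 1 → μ = t • μ₁ + (1 - t) • μ₂ → μ₁ = μ₂)
      ↔ (∀ B : Set (Ω × X), MeasurableSet B → Φ ⁻¹' B = B → μ B = 0 ∨ μ B = 1) := by
  have key : ∀ ν : Measure (Ω × X),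
      (∀ s : Set (Ω × X), MeasurableSet s → ν (Φ ⁻¹' s) = ν s) → MeasurePreserving Φ ν ν := by
    intro ν h
    refine ⟨hΦmeas, ?_⟩
    ext s hs
    rw [Measure.map_apply hΦmeas hs, h s hs]
  have key' : ∀ ν : Measure (Ω × X), MeasurePreserving Φ ν ν →
      (∀ s : Set (Ω × X), MeasurableSet s → ν (Φ ⁻¹' s) = ν s) := by
    intro ν h s hs
    exact h.measure_preimage hs.nullMeasurableSet
  have hμ := key μ hμinv
  constructor
  · intro h
    have hE : Ergodic Φ μ := by
      apply Ergodic.of_mem_extremePoints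
      rw [mem_extremePoints_iff_left]
      refine ⟨⟨hμ, hμprob⟩, ?_⟩
      rintro μ₁ ⟨h1, p1⟩ μ₂ ⟨h2, p2⟩ ⟨a, b, ha, hb, hab, hm⟩
      have ha' : a ≠ ⊤ := by rintro rfl; simp at hab
      have hb' : b ≠ ⊤ := by rintro rfl; simp at hab
      lift a to ℝ≥0 using ha'
      lift b to ℝ≥0 using hb'
      norm_cast at ha hb hab
      have hb1 : b = 1 - a := by rw [← hab, add_tsub_cancel_left]
      have hlt : a < 1 := by rw [← hab]; exact lt_add_of_pos_right a hb
      have e : μ₁ = μ₂ := h μ₁ μ₂ a p1 (key' _ h1) p2 (key' _ h2) ha hlt (by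
        rw [← hb1]; exact hm.symm)
      subst e
      rw [← hm, ← add_smul]
      norm_cast
      rw [hab]
      simp
    intro B hB hBi
    exact hE.toPreErgodic.prob_eq_zero_or_one hB hBi
  · intro h μ₁ μ₂ t p1 h1 p2 h2 t0 t1 hm
    have hE : Ergodic Φ μ := by
      refine ⟨hμ, ⟨?_⟩⟩
      intro s hs hsi
      rw [eventuallyConst_set]
      rcases h s hs hsi with h0 | h0
      · right
        exact measure_eq_zero_iff_ae_notMem.1 h0
      · left
        exact (prob_compl_eq_zero_iff hs).2 h0
    have hs : 0 < 1 - t := tsub_pos_of_lt t1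
    have hz : ∀ s, μ s = 0 → μ₁ s = 0 ∧ μ₂ s = 0 := by
      intro s h0
      rw [hm, Measure.add_apply, Measure.smul_apply, Measure.smul_apply, add_eq_zero] at h0
      generalize 1 - t = r at *
      simpa only [ENNReal.smul_def, smul_eq_mul, mul_eq_zero, ENNReal.coe_eq_zero, t0.ne', hs.ne',
        false_or] using h0
    have a1 : μ₁ ≪ μ := by
      intro s h0
      exact (hz s h0).left
    have a2 : μ₂ ≪ μ := by
      intro s h0
      exact (hz s h0).right
    rw [hE.eq_of_absolutelyContinuous (key _ h1) a1, hE.eq_of_absolutelyContinuous (key _ h2) a2]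
end

section
/- Let Ω and X be compact metric spaces and let Φ be a skew-product transformation on Ω×X with continuous base φ: Ω → Ω satisfying condition (H). Let (ω_k, x_k) be points of Ω×X and n_k → ∞ integers, and set μ_k = (1/n_k) Σ_{i=0}^{n_k−1} Φ^i_* δ_{(ω_k,x_k)}, where δ_p is the Dirac measure at p. If μ_k converges in the weak* topology to a Borel probability measure μ' on Ω×X, then μ' is Φ-invariant. -/
open MeasureTheory Filter Topology ENNReal

/-- Integral against an empirical measure along an orbit. -/
theorem integral_empirical {Y : Type*} [MeasurableSpace Y] (T : Y → Y) (hT : Measurable T)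
    (y : Y) (n : ℕ) (g : Y → ℝ) (hg : Measurable g) :
    ∫ q, g q ∂(((n : ℝ≥0∞))⁻¹ • ∑ i ∈ Finset.range n, Measure.map T^[i] (Measure.dirac y)) =
      (n : ℝ)⁻¹ * ∑ i ∈ Finset.range n, g (T^[i] y) := by
  rw [integral_smul_measure, integral_finsetSum_measure]
  · simp only [ENNReal.toReal_inv, ENNReal.toReal_natCast, smul_eq_mul]
    congr 1
    refine Finset.sum_congr rfl fun i _ => ?_
    rw [Measure.map_dirac' (hT.iterate i), integral_dirac' _ _ hg.stronglyMeasurable]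
  · intro i _
    rw [Measure.map_dirac' (hT.iterate i)]
    exact integrable_dirac' hg.stronglyMeasurable (by simp)

theorem integral_empirical_sub_tendsto {Y : Type*} [MeasurableSpace Y] (T : Y → Y)
    (hT : Measurable T) (y : ℕ → Y) (n : ℕ → ℕ) (hn : Tendsto n atTop atTop)
    (μk : ℕ → Measure Y)
    (hμk : ∀ k, μk k =
      ((n k : ℝ≥0∞))⁻¹ • ∑ i ∈ Finset.range (n k), Measure.map T^[i] (Measure.dirac (y k)))
    (g : Y → ℝ) (hg : Measurable g) (C : ℝ) (hC : ∀ q, |g q| ≤ C) :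
    Tendsto (fun k => ∫ q, g (T q) ∂(μk k) - ∫ q, g q ∂(μk k)) atTop (𝓝 0) := by
  have key : ∀ k, ∫ q, g (T q) ∂(μk k) - ∫ q, g q ∂(μk k) =
      (n k : ℝ)⁻¹ * (g (T^[n k] (y k)) - g (y k)) := by
    intro k
    rw [hμk k, integral_empirical T hT _ _ (fun q => g (T q)) (hg.comp hT),
      integral_empirical T hT _ _ g hg, ← mul_sub, ← Finset.sum_sub_distrib]
    congr 1
    have := Finset.sum_range_sub (fun i => g (T^[i] (y k))) (n k)
    simpa only [Function.iterate_succ_apply', Function.iterate_zero, id] using this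
  have h0 : Tendsto (fun k => (n k : ℝ)⁻¹ * (2 * C)) atTop (𝓝 0) := by
    have := (tendsto_inv_atTop_zero.comp
      (tendsto_natCast_atTop_atTop (R := ℝ))).comp hn
    simpa using this.mul_const (2 * C)
  refine squeeze_zero_norm (fun k => ?_) h0
  rw [key k, norm_mul, Real.norm_of_nonneg (by positivity : (0 : ℝ) ≤ (n k : ℝ)⁻¹)]
  refine mul_le_mul_of_nonneg_left ?_ (by positivity)
  rw [Real.norm_eq_abs]
  have h1 := abs_le.1 (hC (T^[n k] (y k)))
  have h2 := abs_le.1 (hC (y k))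
  exact abs_le.2 ⟨by linarith, by linarith⟩

theorem isProbabilityMeasure_empirical {Y : Type*} [MeasurableSpace Y] (T : Y → Y)
    (hT : Measurable T) (y : Y) (n : ℕ) (hn : n ≠ 0) :
    IsProbabilityMeasure
      (((n : ℝ≥0∞))⁻¹ • ∑ i ∈ Finset.range n, Measure.map T^[i] (Measure.dirac y)) := by
  constructor
  have : ∀ i ∈ Finset.range n, (Measure.map T^[i] (Measure.dirac y)) Set.univ = 1 := by
    intro i _
    rw [Measure.map_dirac' (hT.iterate i)]
    simp
  rw [Measure.smul_apply, Measure.finsetSum_apply, Finset.sum_congr rfl this]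
  simp only [Finset.sum_const, Finset.card_range, nsmul_eq_mul, mul_one, smul_eq_mul]
  exact ENNReal.inv_mul_cancel (by exact_mod_cast hn) (by simp)

/-- Mapping theorem for almost everywhere continuous maps. -/
theorem tendsto_integral_comp_of_ae_continuousAt {Y : Type*} [MetricSpace Y]
    [MeasurableSpace Y] [BorelSpace Y] (T : Y → Y) (hT : Measurable T)
    (μs : ℕ → ProbabilityMeasure Y) (μ : ProbabilityMeasure Y)
    (hμ : Tendsto μs atTop (𝓝 μ))
    (hD : (μ : Measure Y) {q | ¬ ContinuousAt T q} = 0) :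
    Tendsto (fun k => (μs k).map hT.aemeasurable) atTop (𝓝 (μ.map hT.aemeasurable)) := by
  refine tendsto_of_forall_isClosed_limsup_le' fun F hF => ?_
  have hsub : closure (T ⁻¹' F) ⊆ T ⁻¹' F ∪ {q | ¬ ContinuousAt T q} := by
    intro q hq
    by_cases hc : ContinuousAt T q
    · left
      have := hc.continuousWithinAt.mem_closure hq (Set.mapsTo_preimage T F)
      rwa [hF.closure_eq] at this
    · right; exact hc
  calc limsup (fun i => (((μs i).map hT.aemeasurable : ProbabilityMeasure Y) : Measure Y) F) atTop
      ≤ limsup (fun i => (μs i : Measure Y) (closure (T ⁻¹' F))) atTop := by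
        refine limsup_le_limsup (Eventually.of_forall fun i => ?_)
        simp only [ProbabilityMeasure.toMeasure_map]
        rw [Measure.map_apply hT hF.measurableSet]
        exact measure_mono subset_closure
    _ ≤ (μ : Measure Y) (closure (T ⁻¹' F)) :=
        ProbabilityMeasure.limsup_measure_closed_le_of_tendsto hμ isClosed_closure
    _ ≤ (μ : Measure Y) (T ⁻¹' F) + (μ : Measure Y) {q | ¬ ContinuousAt T q} :=
        (measure_mono hsub).trans (measure_union_le _ _)
    _ = _ := by
        rw [hD, add_zero]
        simp only [ProbabilityMeasure.toMeasure_map]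
        rw [Measure.map_apply hT hF.measurableSet]

theorem exists_abs_bound {Y : Type*} [TopologicalSpace Y] [CompactSpace Y] (g : Y → ℝ)
    (hg : Continuous g) : ∃ C, ∀ q, |g q| ≤ C := by
  obtain ⟨C, hC⟩ := isCompact_univ.exists_bound_of_continuousOn hg.continuousOn
  exact ⟨C, fun q => hC q (Set.mem_univ q)⟩

/-- Any weak* limit of Birkhoff averages of Dirac measures along orbits of a
skew-product transformation satisfying condition (H) is invariant. -/
theorem weakStar_limit_of_birkhoff_averages_invariant_SPT
    {Ω X : Type*}
    [MetricSpace Ω] [CompactSpace Ω] [MeasurableSpace Ω] [BorelSpace Ω]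
    [MetricSpace X] [CompactSpace X] [MeasurableSpace X] [BorelSpace X]
    (φ : Ω → Ω) (hφ : Continuous φ)
    (Φ : Ω × X → Ω × X) (hΦmeas : Measurable Φ)
    (hbase : ∀ p : Ω × X, (Φ p).1 = φ p.1)
    (hH : ∀ ν : Measure Ω, IsProbabilityMeasure ν →
      (∀ s : Set Ω, MeasurableSet s → ν (φ ⁻¹' s) = ν s) →
      ν (Prod.fst '' {p : Ω × X | ¬ ContinuousAt Φ p}) = 0)
    (p : ℕ → Ω × X) (n : ℕ → ℕ) (hn : Tendsto n atTop atTop)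
    (μk : ℕ → Measure (Ω × X))
    (hμk : ∀ k, μk k =
      ((n k : ℝ≥0∞))⁻¹ • ∑ i ∈ Finset.range (n k), Measure.map Φ^[i] (Measure.dirac (p k)))
    (μ' : Measure (Ω × X)) (hμ' : IsProbabilityMeasure μ')
    (hconv : ∀ g : Ω × X → ℝ, Continuous g →
      Tendsto (fun k => ∫ q, g q ∂(μk k)) atTop (𝓝 (∫ q, g q ∂μ'))) :
    ∀ s : Set (Ω × X), MeasurableSet s → μ' (Φ ⁻¹' s) = μ' s := by
  obtain ⟨K, hK⟩ := eventually_atTop.1 (hn.eventually_ge_atTop 1)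
  have hprob : ∀ k, IsProbabilityMeasure (μk (k + K)) := fun k => by
    rw [hμk]
    exact isProbabilityMeasure_empirical Φ hΦmeas _ _
      (Nat.one_le_iff_ne_zero.1 (hK _ (Nat.le_add_left K k)))
  have hdiff : ∀ g : Ω × X → ℝ, Continuous g →
      Tendsto (fun k => ∫ q, g (Φ q) ∂(μk k)) atTop (𝓝 (∫ q, g q ∂μ')) := by
    intro g hg
    obtain ⟨C, hC⟩ := exists_abs_bound g hg
    have h1 := integral_empirical_sub_tendsto Φ hΦmeas p n hn μk hμk g hg.measurable C hC
    simpa using h1.add (hconv g hg)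
  have hν : μ' {q : Ω × X | ¬ ContinuousAt Φ q} = 0 := by
    have hpr : IsProbabilityMeasure (μ'.map (Prod.fst : Ω × X → Ω)) :=
      Measure.isProbabilityMeasure_map measurable_fst.aemeasurable
    have hpr2 : IsProbabilityMeasure ((μ'.map (Prod.fst : Ω × X → Ω)).map φ) :=
      Measure.isProbabilityMeasure_map hφ.measurable.aemeasurable
    have heq : (μ'.map (Prod.fst : Ω × X → Ω)).map φ = μ'.map (Prod.fst : Ω × X → Ω) := by
      refine ext_of_forall_integral_eq_of_IsFiniteMeasure fun f => ?_
      have hf := f.continuous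
      rw [integral_map hφ.measurable.aemeasurable hf.aestronglyMeasurable,
        integral_map (f := fun x => f (φ x)) measurable_fst.aemeasurable
          (hf.comp hφ).aestronglyMeasurable,
        integral_map measurable_fst.aemeasurable hf.aestronglyMeasurable]
      have h1 := hdiff (fun q => f q.1) (hf.comp continuous_fst)
      have h2 := hconv (fun q => f (φ q.1)) ((hf.comp hφ).comp continuous_fst)
      simp only [hbase] at h1
      exact tendsto_nhds_unique h2 h1
    have h0 := hH _ hpr (fun s hs => by
      rw [← Measure.map_apply hφ.measurable hs, heq])
    exact measure_mono_null (Set.subset_preimage_image _ _)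
      (Measure.preimage_null_of_map_null measurable_fst.aemeasurable h0)
  let μs : ℕ → ProbabilityMeasure (Ω × X) := fun k => ⟨μk (k + K), hprob k⟩
  let μ : ProbabilityMeasure (Ω × X) := ⟨μ', hμ'⟩
  have hlim : Tendsto μs atTop (𝓝 μ) := by
    rw [ProbabilityMeasure.tendsto_iff_forall_integral_tendsto]
    intro f
    exact (tendsto_add_atTop_iff_nat K).2 (hconv f f.continuous)
  have hmap := tendsto_integral_comp_of_ae_continuousAt Φ hΦmeas μs μ hlim hν
  rw [ProbabilityMeasure.tendsto_iff_forall_integral_tendsto] at hmap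
  have hpr3 : IsProbabilityMeasure (μ'.map Φ) :=
    Measure.isProbabilityMeasure_map hΦmeas.aemeasurable
  have hfin : μ'.map Φ = μ' := by
    refine ext_of_forall_integral_eq_of_IsFiniteMeasure fun f => ?_
    have h1 := hmap f
    simp only [ProbabilityMeasure.toMeasure_map] at h1
    have h2 := (tendsto_add_atTop_iff_nat K).2 (hdiff f f.continuous)
    refine tendsto_nhds_unique h1 (h2.congr fun k => ?_)
    exact (integral_map hΦmeas.aemeasurable f.continuous.aestronglyMeasurable).symm
  intro s hs
  rw [← Measure.map_apply hΦmeas hs, hfin]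
end
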